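/- arXiv:1510.02999 — 2 statements merged into one kernel-verified Lean document; each statement's English description precedes it below -/
import Mathlib

section
/- Let Φ : ℝ × ℝ³ → ℝ³ be smooth, suppose that for each t the map Φ(t,·) : ℝ³ → ℝ³ is a bijection whose inverse Ψ(t,·) is such that Ψ : ℝ × ℝ³ → ℝ³ is smooth, define F(t,x) = (D_X Φ)(t, Ψ(t,x)) and G = F − I. Then for all (t,x) and all indices i,j,k: ∂_j G_{ik} − ∂_k G_{ij} = G_{mk} ∂_m G_{ij} − G_{mj} ∂_m G_{ik} (summation over m; all spatial derivatives ∂ are with respect to x). Equivalently, F_{mk} ∂_m F_{ij} = F_{mj} ∂_m F_{ik}. -/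
noncomputable section

/-- Three-dimensional Euclidean space. -/
abbrev E3 : Type := EuclideanSpace ℝ (Fin 3)

/-- The spatial partial derivative `∂_j u` of a scalar function on `ℝ³`. -/
noncomputable def pd (j : Fin 3) (u : E3 → ℝ) (x : E3) : ℝ :=
  fderiv ℝ u x (EuclideanSpace.single j 1)

/-! By the chain rule, differentiating `F = Dφ ∘ ψ` in the spatial direction `F v` amounts to
differentiating `Dφ` in the material direction `v`, because `Dψ` inverts `F`. So
`(v, w) ↦ DF[F v] w` is the second derivative of `φ`, which is symmetric. Substituting `F = I + G`
into this symmetry gives the constraint on `G`. -/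

open Topology

section CoordinateFree

variable {𝕜 E V : Type*} [NontriviallyNormedField 𝕜]
  [NormedAddCommGroup E] [NormedSpace 𝕜 E] [NormedAddCommGroup V] [NormedSpace 𝕜 V]

variable (𝕜) in
/-- The deformation gradient `F = Dφ ∘ ψ` in Eulerian coordinates of a deformation `φ` from the
material space `V` to the physical space `E`; the map `ψ` is meant to be an inverse of `φ`. -/
def deformationGradient (φ : V → E) (ψ : E → V) (x : E) : V →L[𝕜] E :=
  fderiv 𝕜 φ (ψ x)

variable (𝕜) in
/-- The displacement gradient `G = F - I` in Eulerian coordinates, as a field of linear maps. -/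
def displacementGradient (φ ψ : E → E) (x : E) : E →L[𝕜] E :=
  deformationGradient 𝕜 φ ψ x - ContinuousLinearMap.id 𝕜 E

theorem fderiv_comp_fderiv_eq_id_of_eventually_rightInverse [FiniteDimensional 𝕜 E]
    {φ ψ : E → E} {x : E} (hφ : DifferentiableAt 𝕜 φ (ψ x)) (hψ : DifferentiableAt 𝕜 ψ x)
    (hinv : ∀ᶠ y in 𝓝 x, φ (ψ y) = y) :
    fderiv 𝕜 ψ x ∘L fderiv 𝕜 φ (ψ x) = ContinuousLinearMap.id 𝕜 E := by
  have right_inv : fderiv 𝕜 φ (ψ x) ∘L fderiv 𝕜 ψ x = ContinuousLinearMap.id 𝕜 E := by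
    rw [← fderiv_fun_comp x hφ hψ, Filter.EventuallyEq.fderiv_eq hinv, fderiv_fun_id]
  apply ContinuousLinearMap.coe_injective
  exact mul_eq_one_comm.mp (congrArg ContinuousLinearMap.toLinearMap right_inv)

theorem fderiv_functional_apply {W : Type*} [NormedAddCommGroup W] [NormedSpace 𝕜 W]
    {A : E → V →L[𝕜] W} {x : E} (hA : DifferentiableAt 𝕜 A x) (ℓ : W →L[𝕜] 𝕜) (w : V) (v : E) :
    fderiv 𝕜 (fun y => ℓ (A y w)) x v = ℓ (fderiv 𝕜 A x v w) :=
  DFunLike.congr_fun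
    ((ℓ ∘L ContinuousLinearMap.apply 𝕜 W w).hasFDerivAt.comp x hA.hasFDerivAt).fderiv v

variable {φ : V → E} {ψ : E → V} {x : E}

theorem differentiableAt_deformationGradient (hφ : DifferentiableAt 𝕜 (fderiv 𝕜 φ) (ψ x))
    (hψ : DifferentiableAt 𝕜 ψ x) : DifferentiableAt 𝕜 (deformationGradient 𝕜 φ ψ) x :=
  hφ.comp x hψ

theorem fderiv_deformationGradient_apply_deformationGradient
    (hφ : DifferentiableAt 𝕜 (fderiv 𝕜 φ) (ψ x)) (hψ : DifferentiableAt 𝕜 ψ x)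
    (hinv : fderiv 𝕜 ψ x ∘L fderiv 𝕜 φ (ψ x) = ContinuousLinearMap.id 𝕜 V) (v : V) :
    fderiv 𝕜 (deformationGradient 𝕜 φ ψ) x (deformationGradient 𝕜 φ ψ x v) =
      fderiv 𝕜 (fderiv 𝕜 φ) (ψ x) v := by
  have chain : fderiv 𝕜 (deformationGradient 𝕜 φ ψ) x =
      fderiv 𝕜 (fderiv 𝕜 φ) (ψ x) ∘L fderiv 𝕜 ψ x := fderiv_comp x hφ hψ
  have inv_apply : fderiv 𝕜 ψ x (deformationGradient 𝕜 φ ψ x v) = v := DFunLike.congr_fun hinv v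
  rw [chain, ContinuousLinearMap.comp_apply, inv_apply]

theorem fderiv_deformationGradient_symm (hφ : DifferentiableAt 𝕜 (fderiv 𝕜 φ) (ψ x))
    (hsymm : IsSymmSndFDerivAt 𝕜 φ (ψ x)) (hψ : DifferentiableAt 𝕜 ψ x)
    (hinv : fderiv 𝕜 ψ x ∘L fderiv 𝕜 φ (ψ x) = ContinuousLinearMap.id 𝕜 V) (v w : V) :
    fderiv 𝕜 (deformationGradient 𝕜 φ ψ) x (deformationGradient 𝕜 φ ψ x v) w =
      fderiv 𝕜 (deformationGradient 𝕜 φ ψ) x (deformationGradient 𝕜 φ ψ x w) v := by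
  simp only [fderiv_deformationGradient_apply_deformationGradient hφ hψ hinv, hsymm v w]

theorem fderiv_displacementGradient (φ ψ : E → E) (x : E) :
    fderiv 𝕜 (displacementGradient 𝕜 φ ψ) x = fderiv 𝕜 (deformationGradient 𝕜 φ ψ) x :=
  fderiv_sub_const _

theorem fderiv_displacementGradient_sub_swap {φ ψ : E → E}
    (hφ : DifferentiableAt 𝕜 (fderiv 𝕜 φ) (ψ x))
    (hsymm : IsSymmSndFDerivAt 𝕜 φ (ψ x)) (hψ : DifferentiableAt 𝕜 ψ x)
    (hinv : fderiv 𝕜 ψ x ∘L fderiv 𝕜 φ (ψ x) = ContinuousLinearMap.id 𝕜 E) (v w : E) :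
    fderiv 𝕜 (displacementGradient 𝕜 φ ψ) x v w - fderiv 𝕜 (displacementGradient 𝕜 φ ψ) x w v =
      fderiv 𝕜 (displacementGradient 𝕜 φ ψ) x (displacementGradient 𝕜 φ ψ x w) v -
        fderiv 𝕜 (displacementGradient 𝕜 φ ψ) x (displacementGradient 𝕜 φ ψ x v) w := by
  have symm := fderiv_deformationGradient_symm hφ hsymm hψ hinv v w
  simp only [fderiv_displacementGradient, displacementGradient, sub_apply,
    ContinuousLinearMap.id_apply, map_sub, symm]
  abel

end CoordinateFree

section Coordinates

open EuclideanSpace (single)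

variable {𝕜 ι : Type*} [RCLike 𝕜] [Fintype ι] [DecidableEq ι]

theorem sum_coord_mul_apply_single (L : EuclideanSpace 𝕜 ι →L[𝕜] 𝕜) (v : EuclideanSpace 𝕜 ι) :
    ∑ m, v m * L (single m 1) = L v := by
  conv_rhs => rw [← (EuclideanSpace.basisFun ι 𝕜).sum_repr v]
  simp

theorem displacement_gradient_constraint_general {φ ψ : EuclideanSpace 𝕜 ι → EuclideanSpace 𝕜 ι}
    {x : EuclideanSpace 𝕜 ι} (hφ : ContDiffAt 𝕜 2 φ (ψ x)) (hψ : DifferentiableAt 𝕜 ψ x)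
    (hinv : ∀ᶠ y in 𝓝 x, φ (ψ y) = y)
    {F : EuclideanSpace 𝕜 ι → ι → ι → 𝕜}
    (hF : ∀ y i j, F y i j = fderiv 𝕜 φ (ψ y) (single j 1) i)
    {G : EuclideanSpace 𝕜 ι → ι → ι → 𝕜}
    (hG : ∀ y i j, G y i j = F y i j - (if i = j then 1 else 0)) (i j k : ι) :
    fderiv 𝕜 (fun y => G y i k) x (single j 1) - fderiv 𝕜 (fun y => G y i j) x (single k 1) =
      ∑ m, (G x m k * fderiv 𝕜 (fun y => G y i j) x (single m 1) -
        G x m j * fderiv 𝕜 (fun y => G y i k) x (single m 1)) := by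
  have hDφ : DifferentiableAt 𝕜 (fderiv 𝕜 φ) (ψ x) :=
    (hφ.fderiv_right (m := 1) (by norm_num)).differentiableAt one_ne_zero
  have symm : IsSymmSndFDerivAt 𝕜 φ (ψ x) := hφ.isSymmSndFDerivAt (by simp)
  have left_inv := fderiv_comp_fderiv_eq_id_of_eventually_rightInverse
    (hφ.differentiableAt two_ne_zero) hψ hinv
  have G_eq (y a b) : G y a b = displacementGradient 𝕜 φ ψ y (single b 1) a := by
    simp [hG, hF, displacementGradient, deformationGradient]
  have hdiff : DifferentiableAt 𝕜 (displacementGradient 𝕜 φ ψ) x :=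
    (differentiableAt_deformationGradient hDφ hψ).sub_const _
  have fderiv_entry (a b v) :
      fderiv 𝕜 (fun y => displacementGradient 𝕜 φ ψ y (single b 1) a) x v =
        fderiv 𝕜 (displacementGradient 𝕜 φ ψ) x v (single b 1) a :=
    fderiv_functional_apply hdiff (EuclideanSpace.proj a) (single b 1) v
  simp only [G_eq, Finset.sum_sub_distrib, sum_coord_mul_apply_single]
  simp only [fderiv_entry]
  exact congr($(fderiv_displacementGradient_sub_swap hDφ symm hψ left_inv
    (single j 1) (single k 1)) i)

end Coordinates

/-- for a smooth family of diffeomorphisms `Φ(t,·)` with smooth inverse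
`Ψ(t,·)`, the Eulerian deformation gradient `F(t,x) = (D_XΦ)(t,Ψ(t,x))` and `G = F − I`
satisfy the compatibility constraint
`∂_j G_{ik} − ∂_k G_{ij} = G_{mk}∂_m G_{ij} − G_{mj}∂_m G_{ik}`. -/
theorem displacement_gradient_constraint
    (Φ Ψ : ℝ → E3 → E3)
    (hΦ : ContDiff ℝ (⊤ : ℕ∞) (fun z : ℝ × E3 => Φ z.1 z.2))
    (hΨ : ContDiff ℝ (⊤ : ℕ∞) (fun z : ℝ × E3 => Ψ z.1 z.2))
    (hinv₁ : ∀ t x, Φ t (Ψ t x) = x)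
    (hinv₂ : ∀ t X, Ψ t (Φ t X) = X)
    (F : ℝ → E3 → Fin 3 → Fin 3 → ℝ)
    (hF : ∀ t x i j, F t x i j = fderiv ℝ (Φ t) (Ψ t x) (EuclideanSpace.single j 1) i)
    (G : ℝ → E3 → Fin 3 → Fin 3 → ℝ)
    (hG : ∀ t x i j, G t x i j = F t x i j - (if i = j then 1 else 0)) :
    ∀ (t : ℝ) (x : E3) (i j k : Fin 3),
      pd j (fun y => G t y i k) x - pd k (fun y => G t y i j) x
        = ∑ m, (G t x m k * pd m (fun y => G t y i j) x
            - G t x m j * pd m (fun y => G t y i k) x) := by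
  intro t x
  have hφ : ContDiff ℝ (⊤ : ℕ∞) (Φ t) := hΦ.comp (contDiff_prodMk_right t)
  have hψ : ContDiff ℝ (⊤ : ℕ∞) (Ψ t) := hΨ.comp (contDiff_prodMk_right t)
  exact displacement_gradient_constraint_general (contDiff_infty.1 hφ 2).contDiffAt
    (hψ.differentiable (by simp) x) (.of_forall (hinv₁ t)) (hF t) (hG t)

end
end

section
/- For every f ∈ C_c^∞(ℝ³; ℝ³) there exists a smooth function p : ℝ³ → ℝ with ∇p ∈ L²(ℝ³; ℝ³) such that Δp = ∇·f (i.e., Δp = ∂_i f_i) and ‖∇p‖_{L²(ℝ³)} ≤ ‖f‖_{L²(ℝ³)}. -/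
open MeasureTheory

noncomputable section

/-!
On the Fourier side `Δp = ∇·f` reads `-4π²‖ξ‖² m(ξ) = -2πi ⟪ξ, F(ξ)⟫`, where `m` and `F` are the
inverse Fourier transforms of `p` and `f`. Then `∇p` is the Fourier transform of `-2πi m(ξ) ξ`, the
orthogonal projection of `F(ξ)` onto the line `ℂξ`; projections do not increase norms, and
Plancherel's theorem turns this pointwise inequality into the `L²` bound. The singularity of `m` at
the origin is of order `‖ξ‖⁻¹`, which is integrable in dimension at least two, so that `p` is a
classical Fourier integral and is smooth.
-/

open Complex FourierTransform Module Submodule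
open scoped InnerProductSpace SchwartzMap

lemma integrable_mul_norm_of_norm_le {α W W' : Type*} [MeasurableSpace α] {μ : Measure α}
    [NormedAddCommGroup W] [NormedAddCommGroup W'] {w : α → ℝ} {h : α → W} {k : α → W'}
    (hk : Integrable (fun x ↦ w x * ‖k x‖) μ) (hw : AEStronglyMeasurable w μ)
    (hh : AEStronglyMeasurable h μ) (hle : ∀ x, ‖h x‖ ≤ ‖k x‖) :
    Integrable (fun x ↦ w x * ‖h x‖) μ := by
  refine hk.mono (hw.mul hh.norm) (.of_forall fun x ↦ ?_)
  simp only [norm_mul, norm_norm]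
  gcongr
  exact hle x

section InverseNorm

variable {V W : Type*} [NormedAddCommGroup V] [NormedSpace ℝ V] [FiniteDimensional ℝ V]
  [MeasurableSpace V] [BorelSpace V] [NormedAddCommGroup W] {μ : Measure V} [μ.IsAddHaarMeasure]

lemma integrable_norm_rpow_neg_mul_norm {F : V → W} {α C : ℝ} (hα₀ : 0 ≤ α)
    (hα : α < finrank ℝ V) (hF : Integrable F μ) (hC : ∀ x, ‖F x‖ ≤ C) :
    Integrable (fun x ↦ ‖x‖ ^ (-α) * ‖F x‖) μ := by
  have hV : 1 ≤ finrank ℝ V := Nat.cast_pos.1 (hα₀.trans_lt hα)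
  have hmeas : AEStronglyMeasurable (fun x ↦ ‖x‖ ^ (-α) * ‖F x‖) μ :=
    (by fun_prop : Measurable fun x : V ↦ ‖x‖ ^ (-α)).aestronglyMeasurable.mul hF.1.norm
  rw [← integrableOn_univ, ← Set.union_compl_self (Metric.ball (0 : V) 1)]
  refine .union (integrableOn_ball_of_norm_le_rpow hV hα (C := C) ?_ hmeas) ?_
  · filter_upwards with x
    rw [Real.norm_of_nonneg (by positivity), mul_comm]
    gcongr
    exact hC x
  · refine hF.norm.integrableOn.mono' hmeas.restrict ?_
    filter_upwards [ae_restrict_mem Metric.isOpen_ball.measurableSet.compl] with x hx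
    have hx : 1 ≤ ‖x‖ := by simpa using hx
    rw [Real.norm_of_nonneg (by positivity)]
    exact mul_le_of_le_one_left (norm_nonneg _)
      (Real.rpow_le_one_of_one_le_of_nonpos hx (neg_nonpos.2 hα₀))

end InverseNorm

lemma fderiv_re_apply {V : Type*} [NormedAddCommGroup V] [NormedSpace ℝ V] {u : V → ℂ} {x : V}
    (hu : DifferentiableAt ℝ u x) (v : V) :
    fderiv ℝ (fun y ↦ (u y).re) x v = (fderiv ℝ u x v).re :=
  DFunLike.congr_fun (reCLM.hasFDerivAt.comp x hu.hasFDerivAt).fderiv v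

section Fourier

variable {V W : Type*} [NormedAddCommGroup V] [InnerProductSpace ℝ V] [FiniteDimensional ℝ V]
  [MeasurableSpace V] [BorelSpace V] [NormedAddCommGroup W] [NormedSpace ℂ W] {h : V → W}

lemma integrable_fourierSMulRight_innerSL (h₀ : Integrable h)
    (h₁ : Integrable fun v ↦ ‖v‖ * ‖h v‖) :
    Integrable (VectorFourier.fourierSMulRight (innerSL ℝ) h) := by
  refine (h₁.const_mul (2 * Real.pi * ‖innerSL ℝ (E := V)‖)).mono' h₀.1.fourierSMulRight ?_
  filter_upwards with v
  rw [← mul_assoc]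
  exact VectorFourier.norm_fourierSMulRight_le _ _ _

lemma fderiv_fourier_apply (h₀ : Integrable h) (h₁ : Integrable fun v ↦ ‖v‖ * ‖h v‖) (x v : V) :
    fderiv ℝ (𝓕 h) x v = 𝓕 (fun ξ ↦ -(2 * Real.pi * I) • ⟪ξ, v⟫_ℝ • h ξ) x := by
  rw [Real.fderiv_fourier h₀ h₁,
    Real.fourier_continuousLinearMap_apply (integrable_fourierSMulRight_innerSL h₀ h₁)]
  rfl

lemma continuous_fourier_of_integrable (hh : Integrable h) : Continuous (𝓕 h) :=
  VectorFourier.fourierIntegral_continuous Real.continuous_fourierChar continuous_inner hh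

lemma fourier_finsetSum {ι : Type*} (s : Finset ι) {h : ι → V → W}
    (hh : ∀ i ∈ s, Integrable (h i)) (x : V) :
    𝓕 (fun ξ ↦ ∑ i ∈ s, h i ξ) x = ∑ i ∈ s, 𝓕 (h i) x := by
  simp only [Real.fourier_eq, Finset.smul_sum]
  exact integral_finsetSum s fun i hi ↦ (Real.fourierIntegral_convergent_iff x).2 (hh i hi)

variable [CompleteSpace W]

lemma map_fourier {W' : Type*} [NormedAddCommGroup W'] [NormedSpace ℂ W'] [CompleteSpace W']
    (L : W →L[ℂ] W') (hh : Integrable h) (x : V) : L (𝓕 h x) = 𝓕 (fun ξ ↦ L (h ξ)) x := by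
  simp only [Real.fourier_eq]
  rw [← L.integral_comp_comm ((Real.fourierIntegral_convergent_iff x).2 hh)]
  simp only [Circle.smul_def, map_smul]

lemma integral_schwartz_smul_fourier (φ : 𝓢(V, ℂ)) (hh : Integrable h) :
    ∫ x, φ x • 𝓕 h x = ∫ ξ, 𝓕 φ ξ • h ξ := by
  have := VectorFourier.integral_fourierIntegral_smul_eq_flip (L := innerₗ V)
    Real.continuous_fourierChar continuous_inner (φ.integrable (μ := volume)) hh
  rw [flip_innerₗ] at this
  exact this.symm

end Fourier

section Plancherel

variable {V H : Type*} [NormedAddCommGroup V] [InnerProductSpace ℝ V] [FiniteDimensional ℝ V]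
  [MeasurableSpace V] [BorelSpace V] [NormedAddCommGroup H] [InnerProductSpace ℂ H]
  [CompleteSpace H] {h : V → H}

lemma fourier_ae_eq_fourier_toLp (h₁ : Integrable h) (h₂ : MemLp h 2) :
    𝓕 h =ᵐ[volume] (𝓕 (h₂.toLp h) : Lp H 2 (volume : Measure V)) := by
  refine ae_eq_of_integral_contDiff_smul_eq (continuous_fourier_of_integrable h₁).locallyIntegrable
    ((Lp.memLp _).locallyIntegrable one_le_two) fun g hg hgs ↦ ?_
  have hgs' : HasCompactSupport fun x ↦ (g x : ℂ) := hgs.comp_left ofReal_zero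
  let φ : 𝓢(V, ℂ) := hgs'.toSchwartzMap (ofRealCLM.contDiff.comp hg)
  calc ∫ x, g x • 𝓕 h x = ∫ x, φ x • 𝓕 h x := rfl
    _ = ∫ x, 𝓕 φ x • h x := integral_schwartz_smul_fourier φ h₁
    _ = ∫ x, 𝓕 φ x • h₂.toLp h x := by
      refine integral_congr_ae ?_
      filter_upwards [h₂.coeFn_toLp] with x hx
      rw [hx]
    _ = ∫ x, φ x • (𝓕 (h₂.toLp h) : Lp H 2 (volume : Measure V)) x := by
      simpa only [TemperedDistribution.fourier_apply, Lp.toTemperedDistribution_apply] using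
        DFunLike.congr_fun (Lp.fourier_toTemperedDistribution_eq (h₂.toLp h)) φ
    _ = ∫ x, g x • (𝓕 (h₂.toLp h) : Lp H 2 (volume : Measure V)) x := rfl

lemma eLpNorm_two_fourier (h₁ : Integrable h) (h₂ : MemLp h 2) :
    eLpNorm (𝓕 h) 2 = eLpNorm h 2 := by
  rw [eLpNorm_congr_ae (fourier_ae_eq_fourier_toLp h₁ h₂), ← Lp.enorm_def, ← ofReal_norm,
    Lp.norm_fourier_eq, ofReal_norm, Lp.enorm_toLp]

end Plancherel

section Coordinates

variable {ι : Type*} [Fintype ι]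

/-- The inclusion `ℝ^ι ⊆ ℂ^ι`, as an isometry; it lets a frequency `ξ` be paired with complex
amplitudes. -/
def complexify : EuclideanSpace ℝ ι →ₗᵢ[ℝ] EuclideanSpace ℂ ι where
  toFun ξ := WithLp.toLp 2 fun i ↦ (ξ i : ℂ)
  map_add' ξ η := by ext i; simp
  map_smul' c ξ := by ext i; simp
  norm_map' ξ := by simp [EuclideanSpace.norm_eq]

@[simp] lemma complexify_apply (ξ : EuclideanSpace ℝ ι) (i : ι) : complexify ξ i = ξ i := rfl

lemma rpow_integral_sum_sq_eq_toReal_eLpNorm {α : Type*} [MeasurableSpace α] {μ : Measure α}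
    {u : α → EuclideanSpace ℝ ι} (hu : AEStronglyMeasurable u μ) :
    (∫ x, ∑ i, u x i ^ 2 ∂μ) ^ (1 / 2 : ℝ) = (eLpNorm u 2 μ).toReal := by
  rw [toReal_eLpNorm hu, lpNorm_eq_integral_norm_rpow_toReal two_ne_zero ENNReal.ofNat_ne_top hu]
  simp [EuclideanSpace.real_norm_sq_eq]

variable [DecidableEq ι]

/-- The partial derivative `∂ᵢ u` of a function on `ℝ^ι`, in the direction of the `i`-th standard
basis vector. -/
def partialDeriv {F : Type*} [NormedAddCommGroup F] [NormedSpace ℝ F] (i : ι)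
    (u : EuclideanSpace ℝ ι → F) (x : EuclideanSpace ℝ ι) : F :=
  fderiv ℝ u x (EuclideanSpace.single i 1)

lemma partialDeriv_re_fourier {h : EuclideanSpace ℝ ι → ℂ} (h₀ : Integrable h)
    (h₁ : Integrable fun ξ ↦ ‖ξ‖ * ‖h ξ‖) (i : ι) (x : EuclideanSpace ℝ ι) :
    partialDeriv i (fun y ↦ (𝓕 h y).re) x =
      (𝓕 (fun ξ ↦ -(2 * Real.pi * I) * (ξ i * h ξ)) x).re := by
  rw [partialDeriv, fderiv_re_apply (Real.differentiable_fourier h₀ h₁ x),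
    fderiv_fourier_apply h₀ h₁]
  simp [EuclideanSpace.inner_single_right]

lemma sum_partialDeriv_re_fourier {G : EuclideanSpace ℝ ι → EuclideanSpace ℂ ι}
    (h₀ : Integrable G) (h₁ : Integrable fun ξ ↦ ‖ξ‖ * ‖G ξ‖) (x : EuclideanSpace ℝ ι) :
    ∑ i, partialDeriv i (fun y ↦ (𝓕 G y i).re) x =
      (𝓕 (fun ξ ↦ -(2 * Real.pi * I) * ⟪complexify ξ, G ξ⟫_ℂ) x).re := by
  have hcoord (i : ι) : Integrable fun ξ ↦ G ξ i :=
    (EuclideanSpace.proj (𝕜 := ℂ) i).integrable_comp h₀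
  have hcoord' (i : ι) : Integrable fun ξ ↦ ‖ξ‖ * ‖G ξ i‖ :=
    integrable_mul_norm_of_norm_le h₁ continuous_norm.aestronglyMeasurable (hcoord i).1
      fun ξ ↦ PiLp.norm_apply_le (G ξ) i
  have hderiv (i : ι) : Integrable fun ξ ↦ -(2 * Real.pi * I) * (ξ i * G ξ i) := by
    have hmeas : AEStronglyMeasurable fun ξ : EuclideanSpace ℝ ι ↦ (ξ i : ℂ) := by fun_prop
    refine .const_mul ((hcoord' i).mono (hmeas.mul (hcoord i).1) (.of_forall fun ξ ↦ ?_)) _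
    simp only [Pi.mul_apply, norm_mul, norm_norm, norm_real]
    gcongr
    exact PiLp.norm_apply_le ξ i
  calc ∑ i, partialDeriv i (fun y ↦ (𝓕 G y i).re) x
      = ∑ i, partialDeriv i (fun y ↦ (𝓕 (fun ξ ↦ G ξ i) y).re) x := by
        refine Finset.sum_congr rfl fun i _ ↦ congrArg (partialDeriv i · x) (funext fun y ↦ ?_)
        exact congrArg re (map_fourier (EuclideanSpace.proj (𝕜 := ℂ) i) h₀ y)
    _ = (∑ i, 𝓕 (fun ξ ↦ -(2 * Real.pi * I) * (ξ i * G ξ i)) x).re := by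
        simp only [partialDeriv_re_fourier (hcoord _) (hcoord' _), re_sum]
    _ = (𝓕 (fun ξ ↦ ∑ i, -(2 * Real.pi * I) * (ξ i * G ξ i)) x).re := by
        rw [fourier_finsetSum _ fun i _ ↦ hderiv i]
    _ = (𝓕 (fun ξ ↦ -(2 * Real.pi * I) * ⟪complexify ξ, G ξ⟫_ℂ) x).re := by
        simp [PiLp.inner_apply, Finset.mul_sum, mul_comm]

end Coordinates

section Symbol

variable {ι : Type*} [Fintype ι]

/-- The Fourier multiplier of `Δ⁻¹∇·`, applied to the vector `a` at frequency `ξ`. Since the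
classical Fourier transform (rather than its inverse) is used to return to physical space, `∂ᵢ`
corresponds to `-2πi ξᵢ`. At `ξ = 0` division by zero makes the value `0`. -/
def pressureSymbol (ξ : EuclideanSpace ℝ ι) (a : EuclideanSpace ℂ ι) : ℂ :=
  I / (2 * Real.pi) * (⟪complexify ξ, a⟫_ℂ / (‖ξ‖ ^ 2 : ℝ))

/-- The Fourier multiplier of `∇Δ⁻¹∇·`: the orthogonal projection of `ℂ^ι` onto the line `ℂξ`. -/
def longitudinalProj (ξ : EuclideanSpace ℝ ι) : EuclideanSpace ℂ ι →L[ℂ] EuclideanSpace ℂ ι :=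
  (ℂ ∙ complexify ξ).starProjection

lemma longitudinalProj_apply (ξ : EuclideanSpace ℝ ι) (a : EuclideanSpace ℂ ι) :
    longitudinalProj ξ a = (⟪complexify ξ, a⟫_ℂ / (‖ξ‖ ^ 2 : ℝ)) • complexify ξ := by
  rw [longitudinalProj, starProjection_singleton, complexify.norm_map]
  rfl

lemma norm_longitudinalProj_apply_le (ξ : EuclideanSpace ℝ ι) (a : EuclideanSpace ℂ ι) :
    ‖longitudinalProj ξ a‖ ≤ ‖a‖ :=
  norm_starProjection_apply_le _ a

lemma inner_complexify_longitudinalProj (ξ : EuclideanSpace ℝ ι) (a : EuclideanSpace ℂ ι) :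
    ⟪complexify ξ, longitudinalProj ξ a⟫_ℂ = ⟪complexify ξ, a⟫_ℂ := by
  rw [longitudinalProj, ← inner_starProjection_left_eq_right,
    starProjection_eq_self_iff.2 (mem_span_singleton_self _)]

lemma neg_two_pi_I_mul_pressureSymbol (ξ : EuclideanSpace ℝ ι) (a : EuclideanSpace ℂ ι) (i : ι) :
    -(2 * Real.pi * I) * (ξ i * pressureSymbol ξ a) = longitudinalProj ξ a i := by
  have hpi : (Real.pi : ℂ) ≠ 0 := ofReal_ne_zero.2 Real.pi_ne_zero
  rw [longitudinalProj_apply, pressureSymbol, PiLp.smul_apply, complexify_apply, smul_eq_mul]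
  field_simp
  rw [I_sq]
  ring

lemma norm_pressureSymbol_le (ξ : EuclideanSpace ℝ ι) (a : EuclideanSpace ℂ ι) :
    ‖pressureSymbol ξ a‖ ≤ ‖ξ‖⁻¹ * ‖a‖ := by
  have hpi : (2 * Real.pi)⁻¹ ≤ 1 := inv_le_one_of_one_le₀ (by linarith [Real.pi_gt_three])
  calc ‖pressureSymbol ξ a‖ = (2 * Real.pi)⁻¹ * (‖⟪complexify ξ, a⟫_ℂ‖ / ‖ξ‖ ^ 2) := by
        simp [pressureSymbol, abs_of_pos Real.pi_pos]
    _ ≤ 1 * (‖complexify ξ‖ * ‖a‖ / ‖ξ‖ ^ 2) := by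
        gcongr
        exact norm_inner_le_norm _ _
    _ = ‖ξ‖⁻¹ * ‖a‖ := by
        rw [complexify.norm_map]
        obtain hξ | hξ := eq_or_ne ‖ξ‖ 0
        · simp [hξ]
        · field_simp

variable {F : EuclideanSpace ℝ ι → EuclideanSpace ℂ ι} {μ : Measure (EuclideanSpace ℝ ι)}

lemma aestronglyMeasurable_inner_complexify_div_norm_sq (hF : AEStronglyMeasurable F μ) :
    AEStronglyMeasurable (fun ξ ↦ ⟪complexify ξ, F ξ⟫_ℂ / (‖ξ‖ ^ 2 : ℝ)) μ :=
  (complexify.continuous.aestronglyMeasurable.inner hF).div₀ (by fun_prop)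

lemma aestronglyMeasurable_pressureSymbol (hF : AEStronglyMeasurable F μ) :
    AEStronglyMeasurable (fun ξ ↦ pressureSymbol ξ (F ξ)) μ :=
  (aestronglyMeasurable_inner_complexify_div_norm_sq hF).const_mul _

lemma aestronglyMeasurable_longitudinalProj (hF : AEStronglyMeasurable F μ) :
    AEStronglyMeasurable (fun ξ ↦ longitudinalProj ξ (F ξ)) μ := by
  simp only [longitudinalProj_apply]
  exact (aestronglyMeasurable_inner_complexify_div_norm_sq hF).smul
    complexify.continuous.aestronglyMeasurable

lemma memLp_longitudinalProj {p : ENNReal} (hF : MemLp F p μ) :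
    MemLp (fun ξ ↦ longitudinalProj ξ (F ξ)) p μ :=
  hF.mono (aestronglyMeasurable_longitudinalProj hF.1) <|
    .of_forall fun ξ ↦ norm_longitudinalProj_apply_le ξ (F ξ)

lemma integrable_pow_mul_pressureSymbol [Nontrivial ι]
    (F : 𝓢(EuclideanSpace ℝ ι, EuclideanSpace ℂ ι)) (n : ℕ) :
    Integrable fun ξ ↦ ‖ξ‖ ^ n * ‖pressureSymbol ξ (F ξ)‖ := by
  have hdim : 1 < Fintype.card ι := Fintype.one_lt_card
  obtain ⟨C, -, hC⟩ := F.decay 0 0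
  simp only [pow_zero, one_mul, norm_iteratedFDeriv_zero] at hC
  have hn : Integrable fun ξ ↦ ‖ξ‖ ^ n * (‖ξ‖⁻¹ * ‖F ξ‖) := by
    cases n with
    | zero =>
      simpa [Real.rpow_neg_one] using integrable_norm_rpow_neg_mul_norm zero_le_one
        (by simpa using hdim) F.integrable hC
    | succ n =>
      refine (F.integrable_pow_mul volume n).congr ?_
      filter_upwards [Measure.ae_ne volume 0] with ξ hξ
      have : ‖ξ‖ ≠ 0 := norm_ne_zero_iff.2 hξ
      field_simp
      ring
  refine integrable_mul_norm_of_norm_le (k := fun ξ ↦ ‖ξ‖⁻¹ * ‖F ξ‖) (by simpa using hn)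
    (by fun_prop) (aestronglyMeasurable_pressureSymbol F.continuous.aestronglyMeasurable) fun ξ ↦ ?_
  simpa using norm_pressureSymbol_le ξ (F ξ)

end Symbol

section Pressure

variable {ι : Type*} [Fintype ι] (f : 𝓢(EuclideanSpace ℝ ι, EuclideanSpace ℝ ι))

/-- The inverse Fourier transform of a real vector field `f`, on which the multipliers of `Δ⁻¹∇·`
and `∇Δ⁻¹∇·` act pointwise. -/
def frequencyField : 𝓢(EuclideanSpace ℝ ι, EuclideanSpace ℂ ι) :=
  𝓕⁻ (f.postcompCLM complexify.toContinuousLinearMap)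

lemma fourier_frequencyField (x : EuclideanSpace ℝ ι) :
    𝓕 (frequencyField f : EuclideanSpace ℝ ι → EuclideanSpace ℂ ι) x = complexify (f x) := by
  rw [← SchwartzMap.fourier_coe, frequencyField, FourierTransform.fourier_fourierInv_eq]
  rfl

/-- The pressure `Δ⁻¹∇·f`, as a classical Fourier integral. Taking the real part avoids having to
check that the integral is real. -/
def pressure (x : EuclideanSpace ℝ ι) : ℝ :=
  (𝓕 (fun ξ ↦ pressureSymbol ξ (frequencyField f ξ)) x).re

/-- The vector field `∇Δ⁻¹∇·f`, as the real part of a classical Fourier integral. -/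
def pressureGradient (x : EuclideanSpace ℝ ι) : EuclideanSpace ℝ ι :=
  WithLp.toLp 2 fun i ↦ (𝓕 (fun ξ ↦ longitudinalProj ξ (frequencyField f ξ)) x i).re

lemma contDiff_pressure [Nontrivial ι] : ContDiff ℝ (⊤ : ℕ∞) (pressure f) :=
  reCLM.contDiff.comp <|
    Real.contDiff_fourier fun n _ ↦ integrable_pow_mul_pressureSymbol (frequencyField f) n

lemma integrable_longitudinalProj_frequencyField :
    Integrable fun ξ ↦ longitudinalProj ξ (frequencyField f ξ) :=
  memLp_one_iff_integrable.1 (memLp_longitudinalProj ((frequencyField f).memLp 1))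

lemma partialDeriv_pressure [DecidableEq ι] [Nontrivial ι] (i : ι) (x : EuclideanSpace ℝ ι) :
    partialDeriv i (pressure f) x = pressureGradient f x i := by
  have h₀ : Integrable fun ξ ↦ pressureSymbol ξ (frequencyField f ξ) := by
    rw [← integrable_norm_iff
      (aestronglyMeasurable_pressureSymbol (frequencyField f).continuous.aestronglyMeasurable)]
    simpa using integrable_pow_mul_pressureSymbol (frequencyField f) 0
  have h₁ : Integrable fun ξ ↦ ‖ξ‖ * ‖pressureSymbol ξ (frequencyField f ξ)‖ := by
    simpa using integrable_pow_mul_pressureSymbol (frequencyField f) 1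
  calc partialDeriv i (pressure f) x
      = (𝓕 (fun ξ ↦ longitudinalProj ξ (frequencyField f ξ) i) x).re := by
        simp only [← neg_two_pi_I_mul_pressureSymbol]
        exact partialDeriv_re_fourier h₀ h₁ i x
    _ = pressureGradient f x i :=
        congrArg re (map_fourier (EuclideanSpace.proj (𝕜 := ℂ) i)
          (integrable_longitudinalProj_frequencyField f) x).symm

lemma sum_partialDeriv_pressureGradient [DecidableEq ι] (x : EuclideanSpace ℝ ι) :
    ∑ i, partialDeriv i (fun y ↦ pressureGradient f y i) x =
      ∑ i, partialDeriv i (fun y ↦ f y i) x := by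
  have hF : Integrable fun ξ ↦ ‖ξ‖ * ‖frequencyField f ξ‖ := by
    simpa using (frequencyField f).integrable_pow_mul volume 1
  have hG : Integrable fun ξ ↦ ‖ξ‖ * ‖longitudinalProj ξ (frequencyField f ξ)‖ :=
    integrable_mul_norm_of_norm_le hF continuous_norm.aestronglyMeasurable
      (integrable_longitudinalProj_frequencyField f).1
      fun ξ ↦ norm_longitudinalProj_apply_le ξ (frequencyField f ξ)
  have hf (y : EuclideanSpace ℝ ι) (i : ι) : f y i = (𝓕 ⇑(frequencyField f) y i).re := by
    rw [fourier_frequencyField, complexify_apply, ofReal_re]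
  simp only [hf, pressureGradient, inner_complexify_longitudinalProj,
    sum_partialDeriv_re_fourier (integrable_longitudinalProj_frequencyField f) hG,
    sum_partialDeriv_re_fourier (frequencyField f).integrable hF]

lemma norm_pressureGradient_le (x : EuclideanSpace ℝ ι) :
    ‖pressureGradient f x‖ ≤ ‖𝓕 (fun ξ ↦ longitudinalProj ξ (frequencyField f ξ)) x‖ := by
  simp only [EuclideanSpace.norm_eq, pressureGradient]
  gcongr
  exact abs_re_le_norm _

lemma eLpNorm_frequencyField : eLpNorm (frequencyField f) 2 volume = eLpNorm f 2 volume :=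
  calc eLpNorm (frequencyField f) 2 volume
      = eLpNorm (𝓕 ⇑(frequencyField f)) 2 volume :=
        (eLpNorm_two_fourier (frequencyField f).integrable ((frequencyField f).memLp 2)).symm
    _ = eLpNorm f 2 volume := eLpNorm_congr_norm_ae <| .of_forall fun x ↦ by
        rw [fourier_frequencyField, complexify.norm_map]

lemma eLpNorm_pressureGradient_le : eLpNorm (pressureGradient f) 2 volume ≤ eLpNorm f 2 volume :=
  calc eLpNorm (pressureGradient f) 2 volume
      ≤ eLpNorm (𝓕 fun ξ ↦ longitudinalProj ξ (frequencyField f ξ)) 2 volume :=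
        eLpNorm_mono (norm_pressureGradient_le f)
    _ = eLpNorm (fun ξ ↦ longitudinalProj ξ (frequencyField f ξ)) 2 volume :=
        eLpNorm_two_fourier (integrable_longitudinalProj_frequencyField f)
          (memLp_longitudinalProj ((frequencyField f).memLp 2))
    _ ≤ eLpNorm (frequencyField f) 2 volume :=
        eLpNorm_mono fun ξ ↦ norm_longitudinalProj_apply_le ξ _
    _ = eLpNorm f 2 volume := eLpNorm_frequencyField f

lemma memLp_pressureGradient : MemLp (pressureGradient f) 2 := by
  refine ⟨Continuous.aestronglyMeasurable ?_,
    (eLpNorm_pressureGradient_le f).trans_lt (f.memLp 2 volume).2⟩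
  have := continuous_fourier_of_integrable (integrable_longitudinalProj_frequencyField f)
  unfold pressureGradient
  fun_prop

end Pressure

theorem pressure_gradient_L2_bound_general {ι : Type*} [Fintype ι] [DecidableEq ι] [Nontrivial ι]
    (f : 𝓢(EuclideanSpace ℝ ι, EuclideanSpace ℝ ι)) :
    ∃ p : EuclideanSpace ℝ ι → ℝ, ContDiff ℝ (⊤ : ℕ∞) p ∧
      Integrable (fun x ↦ ∑ i, partialDeriv i p x ^ 2) ∧
      (∀ x, ∑ i, partialDeriv i (partialDeriv i p) x = ∑ i, partialDeriv i (fun y ↦ f y i) x) ∧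
      (∫ x, ∑ i, partialDeriv i p x ^ 2) ^ ((1 : ℝ) / 2) ≤
        (∫ x, ∑ i, f x i ^ 2) ^ ((1 : ℝ) / 2) := by
  have hgrad : MemLp (pressureGradient f) 2 := memLp_pressureGradient f
  have hderiv (i : ι) : partialDeriv i (pressure f) = fun x ↦ pressureGradient f x i :=
    funext (partialDeriv_pressure f i)
  refine ⟨pressure f, contDiff_pressure f, ?_, fun x ↦ ?_, ?_⟩
  · simpa only [hderiv, EuclideanSpace.real_norm_sq_eq] using hgrad.integrable_norm_pow two_ne_zero
  · simpa only [hderiv] using sum_partialDeriv_pressureGradient f x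
  · simp only [hderiv]
    rw [rpow_integral_sum_sq_eq_toReal_eLpNorm hgrad.1,
      rpow_integral_sum_sq_eq_toReal_eLpNorm f.continuous.aestronglyMeasurable]
    exact ENNReal.toReal_mono (f.memLp 2 volume).eLpNorm_ne_top (eLpNorm_pressureGradient_le f)

/-- for every `f ∈ C_c^∞(ℝ³;ℝ³)` there is a smooth `p : ℝ³ → ℝ` with
`∇p ∈ L²`, `Δp = ∇·f`, and `‖∇p‖_{L²} ≤ ‖f‖_{L²}`. -/
theorem pressure_gradient_L2_bound
    (f : E3 → Fin 3 → ℝ) (hf : ContDiff ℝ (⊤ : ℕ∞) f) (hsupp : HasCompactSupport f) :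
    ∃ p : E3 → ℝ, ContDiff ℝ (⊤ : ℕ∞) p ∧
      Integrable (fun x : E3 => ∑ i, (pd i p x) ^ 2) ∧
      (∀ x : E3, ∑ i, pd i (pd i p) x = ∑ i, pd i (fun y => f y i) x) ∧
      (∫ x : E3, ∑ i, (pd i p x) ^ 2) ^ ((1 : ℝ) / 2)
        ≤ (∫ x : E3, ∑ i, (f x i) ^ 2) ^ ((1 : ℝ) / 2) := by
  have hsupp' : HasCompactSupport fun x ↦ WithLp.toLp 2 (f x) := hsupp.comp_left rfl
  exact pressure_gradient_L2_bound_general (hsupp'.toSchwartzMap (by fun_prop))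
end
end
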